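/- Let N ≥ 3, let E ⊆ S^{N-1} be (N−2)-rectifiable, and let C = { t w : t ≥ 0, w ∈ E } be the cone generated by E. Then: (i) C is (N−1)-rectifiable; and (ii) if in addition H^{N-2}(E) < ∞, then for H^{N-1}-almost every x ∈ C, any (N−1)-dimensional linear subspace P ⊆ ℝ^N that is an approximate tangent plane of C at x contains x (equivalently, ⟨x, ν⟩ = 0 for any unit normal ν to P). -/

import Mathlib

open MeasureTheory Metric Set Filter
open scoped ENNReal NNReal Topology

noncomputable section

/-- `ℝ^N` as a Euclidean space. -/
abbrev Rn (N : ℕ) := EuclideanSpace ℝ (Fin N)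

/-- `u` is locally Lipschitz on the set `s` (neighborhoods taken within `s`). -/
def LocLipOn (N : ℕ) (u : Rn N → ℝ) (s : Set (Rn N)) : Prop :=
  ∀ x ∈ s, ∃ t ∈ nhdsWithin x s, ∃ C : ℝ≥0, LipschitzOnWith C u t

/-- `E` is `k`-rectifiable: up to an `H^k`-null set, `E` is covered by countably many
Lipschitz images of `ℝ^k`. -/
def KRectifiable (N k : ℕ) (E : Set (Rn N)) : Prop :=
  ∃ f : ℕ → (EuclideanSpace ℝ (Fin k) → Rn N),
    (∀ i, ∃ C : ℝ≥0, LipschitzWith C (f i)) ∧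
    μH[(k : ℝ)] (E \ ⋃ i, Set.range (f i)) = 0

/-- The linear subspace `P` is an approximate tangent plane (for `H^k`, `k = d`) of `S`
at `x`: the rescaled sets `(S - x)/r` converge to `P` weakly-* in the sense of measures
against continuous compactly supported test functions. -/
def ApproxTangentAt (N : ℕ) (d : ℝ) (S : Set (Rn N)) (x : Rn N)
    (P : Submodule ℝ (Rn N)) : Prop :=
  ∀ φ : Rn N → ℝ, Continuous φ → HasCompactSupport φ →
    Tendsto (fun r : ℝ => ∫ y in (fun y => r⁻¹ • (y - x)) '' S, φ y ∂μH[d])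
      (𝓝[>] 0) (𝓝 (∫ y in (P : Set (Rn N)), φ y ∂μH[d]))

/-!
Let `f` be Lipschitz on `ℝ^k`. The map `(t, p) ↦ t • f p` is locally Lipschitz on `ℝ × ℝ^k`, so its
range is a countable union of Lipschitz images. Since `H^{d+1}([a, a + 1] × A) ≤ 2 H^d(A)`, the null
set missed by the Lipschitz pieces of `E` generates a null cone. Hence the cone is
`(k + 1)`-rectifiable.

The blow-up `(C - x) / r` of a cone `C` is a cone with vertex `-x / r`, so it is invariant under the
homothety `y ↦ (1 + r) y + x` of ratio `1 + r` about that vertex. This homothety moves `-x` to the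
point `-r x` near the origin and scales `H^d` by `(1 + r)^d → 1`. In the limit an approximate
tangent plane `P` has at least as much mass near `-x` as near `0`, where its mass is positive; hence
`-x ∈ P`.
-/

open scoped Pointwise
open Module (finrank)

section HausdorffMeasure

variable {X Y : Type*} [EMetricSpace X] [EMetricSpace Y]

/-- The Hausdorff content `H^d_δ`, obtained from coverings by sets of diameter at most `δ`. The
Hausdorff measure `H^d` is its supremum over `δ > 0`. -/
def hausdorffContent (d : ℝ) (δ : ℝ≥0∞) : OuterMeasure X :=
  OuterMeasure.mkMetric'.pre (fun s => ediam s ^ d) δ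

lemma hausdorffContent_le {d : ℝ} {δ : ℝ≥0∞} {s : Set X} (hs : ediam s ≤ δ) :
    hausdorffContent d δ s ≤ ediam s ^ d :=
  OuterMeasure.mkMetric'.pre_le hs

lemma Icc_subset_iUnion_Icc_mul (a : ℝ) {ρ : ℝ} (hρ : 0 < ρ) :
    Icc a (a + 1) ⊆
      ⋃ j ∈ Finset.range (⌊ρ⁻¹⌋₊ + 1), Icc (a + j * ρ) (a + (j + 1) * ρ) := by
  intro s hs
  have hsa : 0 ≤ s - a := sub_nonneg.2 hs.1
  refine mem_biUnion (x := ⌊(s - a) / ρ⌋₊) ?_ ⟨?_, ?_⟩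
  · have : (s - a) / ρ ≤ ρ⁻¹ := by
      rw [div_eq_mul_inv]
      exact mul_le_of_le_one_left (inv_nonneg.2 hρ.le) (by linarith [hs.2])
    exact Finset.mem_coe.2 (Finset.mem_range.2 (Nat.lt_succ_of_le (Nat.floor_le_floor this)))
  · have := (le_div_iff₀ hρ).1 (Nat.floor_le (div_nonneg hsa hρ.le))
    linarith
  · have := (div_le_iff₀ hρ).1 (Nat.lt_floor_add_one ((s - a) / ρ)).le
    linarith

lemma ediam_prod_le (s : Set X) (t : Set Y) : ediam (s ×ˢ t) ≤ max (ediam s) (ediam t) :=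
  ediam_le fun _ hp _ hq =>
    max_le_max (edist_le_ediam_of_mem hp.1 hq.1) (edist_le_ediam_of_mem hp.2 hq.2)

lemma floor_inv_add_one_mul_rpow_le {d ρ : ℝ} (hρ : 0 < ρ) (hρ1 : ρ ≤ 1) :
    (⌊ρ⁻¹⌋₊ + 1) * ρ ^ (d + 1) ≤ 2 * ρ ^ d :=
  calc (⌊ρ⁻¹⌋₊ + 1) * ρ ^ (d + 1) ≤ (ρ⁻¹ + 1) * ρ ^ (d + 1) := by
        gcongr
        exact Nat.floor_le (inv_nonneg.2 hρ.le)
    _ = (1 + ρ) * ρ ^ d := by rw [Real.rpow_add_one hρ.ne']; field_simp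
    _ ≤ 2 * ρ ^ d := by gcongr; linarith

lemma hausdorffContent_Icc_prod_le_of_ediam_le {d : ℝ} (hd : 0 ≤ d) {δ : ℝ≥0∞} {ρ : ℝ}
    (hρ : 0 < ρ) (hρ1 : ρ ≤ 1) (hρδ : ENNReal.ofReal ρ ≤ δ) (a : ℝ) {t : Set X}
    (ht : ediam t ≤ ENNReal.ofReal ρ) :
    hausdorffContent (d + 1) δ (Icc a (a + 1) ×ˢ t) ≤ 2 * ENNReal.ofReal ρ ^ d := by
  set slab : ℕ → Set (ℝ × X) := fun j => Icc (a + j * ρ) (a + (j + 1) * ρ) ×ˢ t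
  have hcover : Icc a (a + 1) ×ˢ t ⊆ ⋃ j ∈ Finset.range (⌊ρ⁻¹⌋₊ + 1), slab j := by
    simp only [slab, ← iUnion_prod_const]
    exact prod_mono_left (Icc_subset_iUnion_Icc_mul a hρ)
  have hslab (j : ℕ) : ediam (slab j) ≤ ENNReal.ofReal ρ := by
    refine (ediam_prod_le _ _).trans (max_le ?_ ht)
    rw [Real.ediam_Icc]
    exact ENNReal.ofReal_le_ofReal (by linarith)
  calc hausdorffContent (d + 1) δ (Icc a (a + 1) ×ˢ t)
      ≤ ∑ j ∈ Finset.range (⌊ρ⁻¹⌋₊ + 1), hausdorffContent (d + 1) δ (slab j) :=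
        (measure_mono hcover).trans (measure_biUnion_finset_le _ _)
    _ ≤ ∑ _j ∈ Finset.range (⌊ρ⁻¹⌋₊ + 1), ENNReal.ofReal ρ ^ (d + 1) := by
        gcongr with j
        exact (hausdorffContent_le ((hslab j).trans hρδ)).trans
          (ENNReal.rpow_le_rpow (hslab j) (by positivity))
    _ = ENNReal.ofReal ((⌊ρ⁻¹⌋₊ + 1) * ρ ^ (d + 1)) := by
        rw [Finset.sum_const, Finset.card_range, ENNReal.ofReal_rpow_of_pos hρ,
          ← ENNReal.ofReal_nsmul, nsmul_eq_mul, Nat.cast_add_one]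
    _ ≤ ENNReal.ofReal (2 * ρ ^ d) :=
        ENNReal.ofReal_le_ofReal (floor_inv_add_one_mul_rpow_le hρ hρ1)
    _ = 2 * ENNReal.ofReal ρ ^ d := by
        rw [ENNReal.ofReal_mul zero_le_two, ENNReal.ofReal_rpow_of_pos hρ, ENNReal.ofReal_ofNat]

lemma hausdorffContent_Icc_prod_le_of_ediam_lt {d : ℝ} (hd : 0 ≤ d) {δ : ℝ≥0∞} (a : ℝ) {t : Set X}
    (ht1 : ediam t < 1) (htδ : ediam t < δ) :
    hausdorffContent (d + 1) δ (Icc a (a + 1) ×ˢ t) ≤ 2 * ediam t ^ d := by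
  -- `ediam t` may vanish, so `Icc a (a + 1)` is cut into pieces of length `ρ ↓ ediam t`.
  have hlim : Tendsto (fun ρ : ℝ≥0∞ => 2 * ρ ^ d) (𝓝[>] ediam t) (𝓝 (2 * ediam t ^ d)) :=
    (ENNReal.Tendsto.const_mul (ENNReal.continuous_rpow_const.tendsto _)
      (Or.inr ENNReal.ofNat_ne_top)).mono_left nhdsWithin_le_nhds
  have : (𝓝[>] ediam t).NeBot := nhdsGT_neBot_of_exists_gt ⟨1, ht1⟩
  refine ge_of_tendsto hlim ?_
  filter_upwards [Ioo_mem_nhdsGT (lt_min ht1 htδ)] with ρ hρ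
  obtain ⟨hρ1, hρδ⟩ := lt_min_iff.1 hρ.2
  have hρtop : ρ ≠ ⊤ := hρ1.ne_top
  have hofReal : ENNReal.ofReal ρ.toReal = ρ := ENNReal.ofReal_toReal hρtop
  rw [← hofReal]
  exact hausdorffContent_Icc_prod_le_of_ediam_le hd
    (ENNReal.toReal_pos (pos_of_gt hρ.1).ne' hρtop) (ENNReal.toReal_le_of_le_ofReal zero_le_one
      (by simpa using hρ1.le)) (hofReal.trans_le hρδ.le) a (hρ.1.le.trans hofReal.ge)

variable [MeasurableSpace X] [BorelSpace X] [MeasurableSpace Y] [BorelSpace Y]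

lemma hausdorffMeasure_le_of_hausdorffContent_le {d : ℝ} {s : Set X} {c : ℝ≥0∞}
    (h : ∀ δ > 0, hausdorffContent d δ s ≤ c) : μH[d] s ≤ c := by
  rw [Measure.hausdorffMeasure, ← OuterMeasure.coe_mkMetric, OuterMeasure.mkMetric,
    OuterMeasure.mkMetric', OuterMeasure.iSup_apply]
  simp only [OuterMeasure.iSup_apply]
  exact iSup₂_le h

lemma hausdorffMeasure_Icc_prod_le {d : ℝ} (hd : 0 ≤ d) (a : ℝ) (A : Set X) :
    μH[d + 1] (Icc a (a + 1) ×ˢ A) ≤ 2 * μH[d] A := by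
  refine hausdorffMeasure_le_of_hausdorffContent_le fun δ hδ => ?_
  let ν : OuterMeasure X := OuterMeasure.map Prod.snd
    (OuterMeasure.restrict (Icc a (a + 1) ×ˢ univ) (hausdorffContent (d + 1) δ))
  have hν (t : Set X) : ν t = hausdorffContent (d + 1) δ (Icc a (a + 1) ×ˢ t) := by
    simp only [ν, OuterMeasure.map_apply, OuterMeasure.restrict_apply, ← univ_prod, prod_inter_prod,
      univ_inter, inter_univ]
  obtain ⟨r, hr, hrlt⟩ := exists_between (lt_min one_pos hδ)
  have hνle : ν ≤ OuterMeasure.mkMetric ((2 : ℝ≥0∞) • fun x => x ^ d) := by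
    refine OuterMeasure.le_mkMetric _ ν r hr fun t ht => ?_
    obtain ⟨ht1, htδ⟩ := lt_min_iff.1 (ht.trans_lt hrlt)
    exact (hν t).trans_le (hausdorffContent_Icc_prod_le_of_ediam_lt hd a ht1 htδ)
  rw [OuterMeasure.mkMetric_smul _ ENNReal.ofNat_ne_top two_ne_zero] at hνle
  simpa [hν, OuterMeasure.coe_mkMetric, Measure.hausdorffMeasure] using hνle A

lemma hausdorffMeasure_univ_prod_eq_zero {d : ℝ} (hd : 0 ≤ d) {A : Set X} (hA : μH[d] A = 0) :
    μH[d + 1] ((univ : Set ℝ) ×ˢ A) = 0 := by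
  rw [← iUnion_Icc_intCast ℝ, iUnion_prod_const]
  refine measure_iUnion_null fun n => ?_
  simpa [hA] using hausdorffMeasure_Icc_prod_le hd n A

lemma hausdorffMeasure_image_eq_zero_of_locallyLipschitz [SecondCountableTopology X] {f : X → Y}
    (hf : LocallyLipschitz f) {d : ℝ} (hd : 0 ≤ d) {s : Set X} (hs : μH[d] s = 0) :
    μH[d] (f '' s) = 0 := by
  choose K t ht hK using hf
  obtain ⟨I, hI, hcover⟩ := TopologicalSpace.countable_cover_nhds ht
  rw [← inter_univ s, ← hcover, inter_iUnion₂, image_iUnion₂]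
  refine (measure_biUnion_null_iff hI).2 fun x _ => nonpos_iff_eq_zero.1 ?_
  calc μH[d] (f '' (s ∩ t x)) ≤ K x ^ d * μH[d] (s ∩ t x) :=
        ((hK x).mono inter_subset_right).hausdorffMeasure_image_le hd
    _ = 0 := by rw [measure_mono_null inter_subset_left hs, mul_zero]

end HausdorffMeasure

lemma hausdorffMeasure_univ_smul_eq_zero {V : Type*} [NormedAddCommGroup V] [NormedSpace ℝ V]
    [SecondCountableTopology V] [MeasurableSpace V] [BorelSpace V] {d : ℝ} (hd : 0 ≤ d)
    {A : Set V} (hA : μH[d] A = 0) : μH[d + 1] ((univ : Set ℝ) • A) = 0 := by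
  rw [← image_smul_prod]
  exact hausdorffMeasure_image_eq_zero_of_locallyLipschitz (contDiff_smul (𝕜 := ℝ)).locallyLipschitz
    (by positivity) (hausdorffMeasure_univ_prod_eq_zero hd hA)

section Rectifiable

variable {N k : ℕ}

lemma KRectifiable.mono {E F : Set (Rn N)} (hF : KRectifiable N k F) (hEF : E ⊆ F) :
    KRectifiable N k E := by
  obtain ⟨f, hf, hnull⟩ := hF
  exact ⟨f, hf, measure_mono_null (sdiff_subset_sdiff_left hEF) hnull⟩

lemma kRectifiable_of_hausdorffMeasure_eq_zero {E : Set (Rn N)} (hE : μH[(k : ℝ)] E = 0) :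
    KRectifiable N k E :=
  ⟨fun _ _ => 0, fun _ => ⟨0, LipschitzWith.const 0⟩, measure_mono_null sdiff_subset hE⟩

lemma kRectifiable_range {f : EuclideanSpace ℝ (Fin k) → Rn N} {K : ℝ≥0} (hf : LipschitzWith K f) :
    KRectifiable N k (range f) :=
  ⟨fun _ => f, fun _ => ⟨K, hf⟩, by simp [iUnion_const]⟩

lemma KRectifiable.iUnion {ι : Type*} [Countable ι] {E : ι → Set (Rn N)}
    (hE : ∀ i, KRectifiable N k (E i)) : KRectifiable N k (⋃ i, E i) := by
  rcases isEmpty_or_nonempty ι with _ | _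
  · exact kRectifiable_of_hausdorffMeasure_eq_zero (by simp)
  choose f hf hnull using hE
  obtain ⟨e, he⟩ := exists_surjective_nat (ι × ℕ)
  refine ⟨fun n => f (e n).1 (e n).2, fun n => hf _ _, ?_⟩
  rw [he.iUnion_comp fun p : ι × ℕ => range (f p.1 p.2), iUnion_sdiff]
  exact measure_iUnion_null fun i => measure_mono_null
    (sdiff_subset_sdiff_right <| iUnion_subset fun n =>
      subset_iUnion (fun p : ι × ℕ => range (f p.1 p.2)) (i, n)) (hnull i)

lemma KRectifiable.union {E F : Set (Rn N)} (hE : KRectifiable N k E) (hF : KRectifiable N k F) :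
    KRectifiable N k (E ∪ F) := by
  rw [union_eq_iUnion]
  exact KRectifiable.iUnion (Bool.forall_bool.2 ⟨hF, hE⟩)

variable {V : Type*} [NormedAddCommGroup V] [NormedSpace ℝ V] [FiniteDimensional ℝ V]

lemma kRectifiable_image_of_lipschitzOnWith (hV : finrank ℝ V = k) {f : V → Rn N} {K : ℝ≥0}
    {s : Set V} (hf : LipschitzOnWith K f s) : KRectifiable N k (f '' s) := by
  obtain ⟨g, hg, hfg⟩ := hf.extend_finite_dimension
  let e : EuclideanSpace ℝ (Fin k) ≃L[ℝ] V := ContinuousLinearEquiv.ofFinrankEq (by simp [hV])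
  refine (kRectifiable_range (hg.comp e.lipschitz)).mono ?_
  rw [hfg.image_eq, range_comp, e.surjective.range_eq, image_univ]
  exact image_subset_range g s

lemma kRectifiable_range_of_locallyLipschitz (hV : finrank ℝ V = k) {f : V → Rn N}
    (hf : LocallyLipschitz f) : KRectifiable N k (range f) := by
  choose K t ht hK using hf
  obtain ⟨I, hI, hcover⟩ := TopologicalSpace.countable_cover_nhds ht
  have := hI.to_subtype
  rw [← image_univ, ← hcover, biUnion_eq_iUnion, image_iUnion]
  exact KRectifiable.iUnion fun x => kRectifiable_image_of_lipschitzOnWith hV (hK x)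

lemma kRectifiable_univ_smul_range {f : EuclideanSpace ℝ (Fin k) → Rn N} {K : ℝ≥0}
    (hf : LipschitzWith K f) : KRectifiable N (k + 1) ((univ : Set ℝ) • range f) := by
  have hsmul : LocallyLipschitz fun p : ℝ × EuclideanSpace ℝ (Fin k) => p.1 • f p.2 :=
    (contDiff_smul (𝕜 := ℝ)).locallyLipschitz.comp <|
      LipschitzWith.prod_fst.locallyLipschitz.prodMk
        (hf.comp LipschitzWith.prod_snd).locallyLipschitz
  refine (kRectifiable_range_of_locallyLipschitz (by simp [add_comm]) hsmul).mono ?_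
  rintro _ ⟨t, -, _, ⟨p, rfl⟩, rfl⟩
  exact ⟨(t, p), rfl⟩

lemma KRectifiable.univ_smul {E : Set (Rn N)} (hE : KRectifiable N k E) :
    KRectifiable N (k + 1) ((univ : Set ℝ) • E) := by
  obtain ⟨f, hf, hnull⟩ := hE
  choose K hK using hf
  have hnull_cone : KRectifiable N (k + 1) ((univ : Set ℝ) • (E \ ⋃ i, range (f i))) :=
    kRectifiable_of_hausdorffMeasure_eq_zero <| by
      simpa using hausdorffMeasure_univ_smul_eq_zero k.cast_nonneg hnull
  have hcover_cone : KRectifiable N (k + 1) ((univ : Set ℝ) • ⋃ i, range (f i)) := by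
    rw [smul_iUnion]
    exact KRectifiable.iUnion fun i => kRectifiable_univ_smul_range (hK i)
  refine (hnull_cone.union hcover_cone).mono ?_
  rw [← smul_union, sdiff_union_self]
  exact smul_subset_smul_left subset_union_left

end Rectifiable

section Tent

variable {X : Type*} [PseudoMetricSpace X]

/-- The tent function of height and radius `ρ` centred at `a`, used as a compactly supported test
function. -/
def tent (a : X) (ρ : ℝ) (y : X) : ℝ := max 0 (ρ - dist y a)

lemma continuous_tent (a : X) (ρ : ℝ) : Continuous (tent a ρ) := by
  unfold tent
  fun_prop

lemma tent_nonneg (a : X) (ρ : ℝ) (y : X) : 0 ≤ tent a ρ y := le_max_left _ _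

lemma tent_eq_zero_of_le_dist {a y : X} {ρ : ℝ} (h : ρ ≤ dist y a) : tent a ρ y = 0 :=
  max_eq_left (sub_nonpos.2 h)

lemma tent_self_pos (a : X) {ρ : ℝ} (hρ : 0 < ρ) : 0 < tent a ρ a := by simpa [tent] using hρ

lemma hasCompactSupport_tent [ProperSpace X] (a : X) (ρ : ℝ) : HasCompactSupport (tent a ρ) := by
  refine HasCompactSupport.intro (isCompact_closedBall a ρ) fun y hy => ?_
  rw [mem_closedBall, not_le] at hy
  exact tent_eq_zero_of_le_dist hy.le

lemma exists_norm_le_mul_tent {F : Type*} [NormedAddCommGroup F] {φ : X → F}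
    (hφ : Continuous φ) (hφc : HasCompactSupport φ) (a : X) :
    ∃ c ρ : ℝ, 0 < ρ ∧ ∀ y, ‖φ y‖ ≤ c * tent a ρ y := by
  obtain ⟨c, hc⟩ := hφ.bounded_above_of_compact_support hφc
  obtain ⟨ρ, hρ, hsupp⟩ := hφc.isCompact.isBounded.subset_closedBall_lt 0 a
  have hc0 : 0 ≤ c := (norm_nonneg _).trans (hc a)
  refine ⟨c, ρ + 1, by positivity, fun y => ?_⟩
  by_cases hy : y ∈ tsupport φ
  · have hdist : dist y a ≤ ρ := hsupp hy
    have : 1 ≤ tent a (ρ + 1) y := (by linarith : 1 ≤ ρ + 1 - dist y a).trans (le_max_right _ _)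
    exact (hc y).trans (le_mul_of_one_le_right hc0 this)
  · rw [image_eq_zero_of_notMem_tsupport hy, norm_zero]
    exact mul_nonneg hc0 (tent_nonneg _ _ _)

end Tent

section BlowUp

variable {V : Type*} [NormedAddCommGroup V] [NormedSpace ℝ V]

/-- The blow-up `(S - x) / r` of `S` at `x`, written as it appears in `ApproxTangentAt`. -/
abbrev blowUp (S : Set V) (x : V) (r : ℝ) : Set V := (fun y => r⁻¹ • (y - x)) '' S

lemma mem_blowUp_iff {S : Set V} {x y : V} {r : ℝ} (hr : r ≠ 0) :
    y ∈ blowUp S x r ↔ r • y + x ∈ S := by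
  constructor
  · rintro ⟨z, hz, rfl⟩
    simpa [hr] using hz
  · exact fun h => ⟨_, h, by simp [hr]⟩

lemma smul_mem_iff_of_cone {C : Set V} (hC : ∀ c : ℝ, 0 < c → ∀ z ∈ C, c • z ∈ C) {c : ℝ}
    (hc : 0 < c) {z : V} : c • z ∈ C ↔ z ∈ C :=
  ⟨fun h => by simpa [hc.ne'] using hC c⁻¹ (inv_pos.2 hc) _ h, hC c hc z⟩

lemma homothety_neg_inv_smul_apply (x y : V) {r : ℝ} (hr : r ≠ 0) (c : ℝ) :
    r • AffineMap.homothety (-(r⁻¹ • x)) c y + x = c • (r • y + x) := by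
  simp only [AffineMap.homothety_apply, vsub_eq_sub, vadd_eq_add]
  match_scalars
  · ring
  · field_simp
    ring

lemma homothety_preimage_blowUp {C : Set V} (hC : ∀ c : ℝ, 0 < c → ∀ z ∈ C, c • z ∈ C) (x : V)
    {r c : ℝ} (hr : r ≠ 0) (hc : 0 < c) :
    AffineMap.homothety (-(r⁻¹ • x)) c ⁻¹' blowUp C x r = blowUp C x r := by
  ext y
  rw [mem_preimage, mem_blowUp_iff hr, mem_blowUp_iff hr, homothety_neg_inv_smul_apply x y hr,
    smul_mem_iff_of_cone hC hc]

lemma tent_homothety_le (x y : V) {δ r : ℝ} (hr : 0 < r) (hrx : r * ‖x‖ ≤ δ / 2) :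
    tent 0 (δ / 2) (AffineMap.homothety (-(r⁻¹ • x)) (1 + r) y) ≤ tent (-x) δ y := by
  set z := AffineMap.homothety (-(r⁻¹ • x)) (1 + r) y
  have hz : (1 + r) • (y + x) = z + r • x := by
    simp only [z, AffineMap.homothety_apply, vsub_eq_sub, vadd_eq_add]
    match_scalars
    · ring
    · field_simp
      ring
  refine max_le_max le_rfl ?_
  rw [dist_zero_right, dist_eq_norm, sub_neg_eq_add]
  have : ‖y + x‖ ≤ ‖z‖ + δ / 2 :=
    calc ‖y + x‖ ≤ (1 + r) * ‖y + x‖ := le_mul_of_one_le_left (norm_nonneg _) (by linarith)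
      _ = ‖z + r • x‖ := by rw [← hz, norm_smul, Real.norm_of_nonneg (by positivity)]
      _ ≤ ‖z‖ + r * ‖x‖ := (norm_add_le _ _).trans_eq (by rw [norm_smul, Real.norm_of_nonneg hr.le])
      _ ≤ ‖z‖ + δ / 2 := by gcongr
  linarith

variable [MeasurableSpace V] [BorelSpace V]

lemma setIntegral_comp_homothety {d : ℝ} (hd : 0 ≤ d) (a : V) {c : ℝ} (hc : c ≠ 0) (S : Set V)
    (φ : V → ℝ) :
    ∫ y in AffineMap.homothety a c ⁻¹' S, φ (AffineMap.homothety a c y) ∂μH[d] =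
      |c|⁻¹ ^ d * ∫ y in S, φ y ∂μH[d] := by
  have hinj : Function.Injective (AffineMap.homothety a c) := fun y z h => by
    simpa [AffineMap.homothety_apply, hc] using h
  have hemb : MeasurableEmbedding (AffineMap.homothety a c) :=
    (Topology.IsOpenEmbedding.of_continuous_injective_isOpenMap
      (AffineMap.homothety_continuous a c) hinj
      (AffineMap.homothety_isOpenMap a c hc)).measurableEmbedding
  rw [← hemb.setIntegral_map, map_homothety_hausdorffMeasure hd a hc, Measure.restrict_smul,
    integral_smul_nnreal_measure, NNReal.smul_def, smul_eq_mul]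
  simp

lemma setIntegral_submodule_pos (P : Submodule ℝ V) [FiniteDimensional ℝ P] {φ : V → ℝ}
    (hφ : Continuous φ) (hφc : HasCompactSupport φ) (hφ0 : 0 ≤ φ) (hφpos : φ 0 ≠ 0) :
    0 < ∫ y in (P : Set V), φ y ∂μH[(finrank ℝ P : ℝ)] := by
  have hemb : Topology.IsClosedEmbedding ((↑) : P → V) :=
    P.closed_of_finiteDimensional.isClosedEmbedding_subtypeVal
  have hiso : Isometry ((↑) : P → V) := isometry_subtype_coe
  have hrange : range ((↑) : P → V) = P := Subtype.range_coe
  rw [← hrange, ← hiso.map_hausdorffMeasure (Or.inl (Nat.cast_nonneg _)),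
    hemb.measurableEmbedding.integral_map]
  exact Continuous.integral_pos_of_hasCompactSupport_nonneg_nonzero (x := (0 : P))
    (hφ.comp hiso.continuous) (hφc.comp_isClosedEmbedding hemb) (fun _ => hφ0 _) hφpos

end BlowUp

section Tangent

variable {N : ℕ} {x : Rn N} {P : Submodule ℝ (Rn N)}

-- The Bochner integral of a non-integrable function is `0`, whereas the integrals of a large tent
-- converge to a positive number; hence the tent is integrable on all small blow-ups.
lemma ApproxTangentAt.eventually_integrableOn {S : Set (Rn N)}
    (hT : ApproxTangentAt N (finrank ℝ P) S x P) {φ : Rn N → ℝ} (hφ : Continuous φ)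
    (hφc : HasCompactSupport φ) :
    ∀ᶠ r in 𝓝[>] (0 : ℝ), IntegrableOn φ (blowUp S x r) μH[(finrank ℝ P : ℝ)] := by
  obtain ⟨c, ρ, hρ, hφ_le⟩ := exists_norm_le_mul_tent hφ hφc 0
  have hpos := setIntegral_submodule_pos P (continuous_tent 0 ρ) (hasCompactSupport_tent 0 ρ)
    (tent_nonneg 0 ρ) (tent_self_pos 0 hρ).ne'
  have hlim := hT (tent 0 ρ) (continuous_tent 0 ρ) (hasCompactSupport_tent 0 ρ)
  filter_upwards [hlim.eventually_ne hpos.ne'] with r hr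
  have htent : IntegrableOn (tent 0 ρ) (blowUp S x r) μH[(finrank ℝ P : ℝ)] :=
    not_imp_comm.1 integral_undef hr
  exact (htent.const_mul c).mono' hφ.aestronglyMeasurable (.of_forall hφ_le)

variable {C : Set (Rn N)}

lemma setIntegral_blowUp_tent_le (hC : ∀ c : ℝ, 0 < c → ∀ z ∈ C, c • z ∈ C) {d : ℝ} (hd : 0 ≤ d)
    {δ r : ℝ} (hr : 0 < r) (hrx : r * ‖x‖ ≤ δ / 2)
    (hint : IntegrableOn (tent (-x) δ) (blowUp C x r) μH[d]) :
    (1 + r)⁻¹ ^ d * ∫ y in blowUp C x r, tent 0 (δ / 2) y ∂μH[d] ≤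
      ∫ y in blowUp C x r, tent (-x) δ y ∂μH[d] := by
  have hr1 : 0 < 1 + r := by positivity
  have hscale := setIntegral_comp_homothety hd (-(r⁻¹ • x)) hr1.ne' (blowUp C x r)
    (tent 0 (δ / 2))
  rw [homothety_preimage_blowUp hC x hr.ne' hr1, abs_of_pos hr1] at hscale
  rw [← hscale]
  exact integral_mono_of_nonneg (.of_forall fun _ => tent_nonneg _ _ _) hint
    (.of_forall fun y => tent_homothety_le x y hr hrx)

lemma ApproxTangentAt.setIntegral_tent_le (hC : ∀ c : ℝ, 0 < c → ∀ z ∈ C, c • z ∈ C)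
    (hT : ApproxTangentAt N (finrank ℝ P) C x P) {δ : ℝ} (hδ : 0 < δ) :
    ∫ y in (P : Set (Rn N)), tent 0 (δ / 2) y ∂μH[(finrank ℝ P : ℝ)] ≤
      ∫ y in (P : Set (Rn N)), tent (-x) δ y ∂μH[(finrank ℝ P : ℝ)] := by
  have hscale : Tendsto (fun r : ℝ => (1 + r)⁻¹ ^ (finrank ℝ P : ℝ)) (𝓝[>] 0) (𝓝 1) := by
    have : ContinuousAt (fun r : ℝ => (1 + r)⁻¹ ^ (finrank ℝ P : ℝ)) 0 := by
      fun_prop (disch := simp)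
    simpa using this.tendsto.mono_left nhdsWithin_le_nhds
  have hsmall : ∀ᶠ r in 𝓝[>] (0 : ℝ), r * ‖x‖ ≤ δ / 2 := by
    have : Tendsto (fun r : ℝ => r * ‖x‖) (𝓝[>] 0) (𝓝 (0 * ‖x‖)) :=
      (continuous_mul_const ‖x‖).tendsto 0 |>.mono_left nhdsWithin_le_nhds
    exact this.eventually_le_const (by simpa using hδ)
  have hlim_origin := hscale.mul
    (hT (tent 0 (δ / 2)) (continuous_tent _ _) (hasCompactSupport_tent _ _))
  have hlim_neg := hT (tent (-x) δ) (continuous_tent _ _) (hasCompactSupport_tent _ _)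
  rw [one_mul] at hlim_origin
  refine le_of_tendsto_of_tendsto hlim_origin hlim_neg ?_
  filter_upwards [hT.eventually_integrableOn (continuous_tent (-x) δ) (hasCompactSupport_tent _ _),
    hsmall, self_mem_nhdsWithin] with r hint hrx hr
  exact setIntegral_blowUp_tent_le hC (Nat.cast_nonneg _) hr hrx hint

theorem ApproxTangentAt.mem_of_cone (hC : ∀ c : ℝ, 0 < c → ∀ z ∈ C, c • z ∈ C)
    (hT : ApproxTangentAt N (finrank ℝ P) C x P) : x ∈ P := by
  suffices h : -x ∈ closure (P : Set (Rn N)) by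
    rw [P.closed_of_finiteDimensional.closure_eq] at h
    exact P.neg_mem_iff.1 h
  refine Metric.mem_closure_iff.2 fun δ hδ => ?_
  have hpos := setIntegral_submodule_pos P (continuous_tent 0 (δ / 2)) (hasCompactSupport_tent _ _)
    (tent_nonneg _ _) (tent_self_pos 0 (half_pos hδ)).ne'
  by_contra! hfar
  refine (hpos.trans_le (hT.setIntegral_tent_le hC hδ)).ne' ?_
  exact setIntegral_eq_zero_of_forall_eq_zero fun y hy =>
    tent_eq_zero_of_le_dist (dist_comm y (-x) ▸ hfar y hy)

end Tangent

theorem statement4_general {N k : ℕ} {E : Set (Rn N)} (hrect : KRectifiable N k E)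
    {C : Set (Rn N)} (hC : C = {z | ∃ t : ℝ, 0 ≤ t ∧ ∃ w ∈ E, z = t • w}) :
    KRectifiable N (k + 1) C ∧
      ∀ (x : Rn N) (P : Submodule ℝ (Rn N)), ApproxTangentAt N (finrank ℝ P) C x P → x ∈ P := by
  subst hC
  refine ⟨hrect.univ_smul.mono ?_, fun x P => ApproxTangentAt.mem_of_cone ?_⟩
  · rintro _ ⟨t, -, w, hw, rfl⟩
    exact smul_mem_smul (mem_univ t) hw
  · rintro c hc _ ⟨t, ht, w, hw, rfl⟩
    exact ⟨c * t, by positivity, w, hw, smul_smul c t w⟩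

/-- Let `N ≥ 3`, `E ⊆ S^{N-1}` be `(N-2)`-rectifiable and
`C = {t w : t ≥ 0, w ∈ E}` the cone over `E`. Then (i) `C` is `(N-1)`-rectifiable, and
(ii) if moreover `H^{N-2}(E) < ∞`, then for `H^{N-1}`-a.e. `x ∈ C`, every
`(N-1)`-dimensional approximate tangent plane of `C` at `x` contains `x`. -/
theorem statement4 {N : ℕ} (hN : 3 ≤ N) (E : Set (Rn N))
    (hE : E ⊆ sphere (0 : Rn N) 1) (hrect : KRectifiable N (N - 2) E)
    (C : Set (Rn N)) (hC : C = {z | ∃ t : ℝ, 0 ≤ t ∧ ∃ w ∈ E, z = t • w}) :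
    KRectifiable N (N - 1) C ∧
    (μH[(N : ℝ) - 2] E < ⊤ →
      ∀ᵐ x ∂(μH[(N : ℝ) - 1]).restrict C,
        ∀ P : Submodule ℝ (Rn N), Module.finrank ℝ P = N - 1 →
          ApproxTangentAt N ((N : ℝ) - 1) C x P → x ∈ P) := by
  obtain ⟨k, rfl⟩ := Nat.exists_eq_add_of_le' (show 2 ≤ N by lia)
  obtain ⟨hCrect, hCtangent⟩ := statement4_general hrect hC
  refine ⟨hCrect, fun _ => .of_forall fun x P hP hT => hCtangent x P ?_⟩
  rwa [hP, Nat.cast_pred (by lia)]
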